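/- Fix real numbers λ₁,λ₂,λ₃,λ₄, pairwise distinct, with λᵢ+λⱼ > 0 for all i ≠ j, and let F : ℝ⁶ → ℝ⁶ be the SO(4) free rigid body vector field. Then F(x₁,x₂,x₃,y₁,y₂,y₃) = 0 if and only if the point lies in t₁ ∪ t₂ ∪ t₃ ∪ s₊ ∪ s₋, where t₁ = {x₂=x₃=y₂=y₃=0}, t₂ = {x₁=x₃=y₁=y₃=0}, t₃ = {x₁=x₂=y₁=y₂=0}, and s₊ (respectively s₋) is the set of points of the form (a₁/(λ₁+λ₄), a₂/(λ₂+λ₄), a₃/(λ₃+λ₄), ε a₁/(λ₂+λ₃), ε a₂/(λ₁+λ₃), ε a₃/(λ₁+λ₂)) with (a₁,a₂,a₃) ∈ ℝ³ and ε = +1 (respectively ε = −1). -/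

import Mathlib

/-!
Rescale the coordinates by `aᵢ = (λᵢ + λ₄) xᵢ` and `bᵢ = (λⱼ + λₖ) yᵢ`, `{i, j, k} = {1, 2, 3}`.
Because the `λ`s are distinct, the vanishing of each component of the field becomes free of
parameters: `aᵢ aⱼ = bᵢ bⱼ` and `aᵢ bⱼ = aⱼ bᵢ` for all `i ≠ j` (`component_eq_zero_iff`).
With `u = a + b` and `v = a - b` the system reads `uᵢ vⱼ = 0` for all `i ≠ j`, so `v = 0` (giving
`s₊`), or `u = 0` (giving `s₋`), or both `u` and `v` are supported on one common index
(giving some `tᵢ`); this is `scaled_system_iff`.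
-/

/-- The SO(4) free rigid body vector field on `ℝ⁶`, in coordinates
`(x₁,x₂,x₃,y₁,y₂,y₃) = (p 0, p 1, p 2, p 3, p 4, p 5)`. -/
noncomputable def rbF (l1 l2 l3 l4 : ℝ) (p : Fin 6 → ℝ) : Fin 6 → ℝ :=
  ![(1/(l1+l2) - 1/(l1+l3)) * (p 1 * p 2) + (1/(l3+l4) - 1/(l2+l4)) * (p 4 * p 5),
    (1/(l2+l3) - 1/(l1+l2)) * (p 0 * p 2) + (1/(l1+l4) - 1/(l3+l4)) * (p 3 * p 5),
    (1/(l1+l3) - 1/(l2+l3)) * (p 0 * p 1) + (1/(l2+l4) - 1/(l1+l4)) * (p 3 * p 4),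
    (1/(l3+l4) - 1/(l1+l3)) * (p 1 * p 5) + (1/(l1+l2) - 1/(l2+l4)) * (p 2 * p 4),
    (1/(l2+l3) - 1/(l3+l4)) * (p 0 * p 5) + (1/(l1+l4) - 1/(l1+l2)) * (p 2 * p 3),
    (1/(l2+l4) - 1/(l2+l3)) * (p 0 * p 4) + (1/(l1+l3) - 1/(l1+l4)) * (p 1 * p 3)]

/-- The point of `s₊` (`ε = 1`) or `s₋` (`ε = -1`) with parameters `(a₁,a₂,a₃)`. -/
noncomputable def sPoint (l1 l2 l3 l4 ε a₁ a₂ a₃ : ℝ) : Fin 6 → ℝ :=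
  ![a₁/(l1+l4), a₂/(l2+l4), a₃/(l3+l4),
    ε * a₁/(l2+l3), ε * a₂/(l1+l3), ε * a₃/(l1+l2)]

/-- The common shape of the six components of the field. The hypotheses `h₁`, `h₂` say that the
differences of sums occurring in the two coefficients are opposite; after clearing denominators,
their common value cancels. -/
lemma component_eq_zero_iff {A B C D d X Y : ℝ} (hA : 0 < A) (hB : 0 < B) (hC : 0 < C)
    (hD : 0 < D) (hd : d ≠ 0) (h₁ : B - A = d) (h₂ : D - C = -d) :
    (1 / A - 1 / B) * X + (1 / C - 1 / D) * Y = 0 ↔ C * D * X = A * B * Y := by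
  have key : (1 / A - 1 / B) * X + (1 / C - 1 / D) * Y
      = d / (A * B * C * D) * (C * D * X - A * B * Y) := by
    have e₁ : 1 / A - 1 / B = d / (A * B) := by
      rw [← h₁]; field_simp
    have e₂ : 1 / C - 1 / D = -d / (C * D) := by
      rw [← h₂]; field_simp
    rw [e₁, e₂]; field_simp; ring
  rw [key, mul_eq_zero, sub_eq_zero]
  have : d / (A * B * C * D) ≠ 0 := by positivity
  simp [this]

/-- The zero set of the rescaled system. -/
lemma scaled_system_iff (a₁ a₂ a₃ b₁ b₂ b₃ : ℝ) :
    (a₂ * a₃ = b₂ * b₃ ∧ a₁ * a₃ = b₁ * b₃ ∧ a₁ * a₂ = b₁ * b₂ ∧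
      a₂ * b₃ = a₃ * b₂ ∧ a₁ * b₃ = a₃ * b₁ ∧ a₁ * b₂ = a₂ * b₁) ↔
    (a₂ = 0 ∧ a₃ = 0 ∧ b₂ = 0 ∧ b₃ = 0) ∨ (a₁ = 0 ∧ a₃ = 0 ∧ b₁ = 0 ∧ b₃ = 0) ∨
      (a₁ = 0 ∧ a₂ = 0 ∧ b₁ = 0 ∧ b₂ = 0) ∨
      (b₁ = a₁ ∧ b₂ = a₂ ∧ b₃ = a₃) ∨ (b₁ = -a₁ ∧ b₂ = -a₂ ∧ b₃ = -a₃) := by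
  constructor
  · rintro ⟨h₁, h₂, h₃, h₄, h₅, h₆⟩
    have k12 : (a₁ + b₁) * (a₂ - b₂) = 0 := by linear_combination h₃ - h₆
    have k21 : (a₂ + b₂) * (a₁ - b₁) = 0 := by linear_combination h₃ + h₆
    have k13 : (a₁ + b₁) * (a₃ - b₃) = 0 := by linear_combination h₂ - h₅
    have k31 : (a₃ + b₃) * (a₁ - b₁) = 0 := by linear_combination h₂ + h₅
    have k23 : (a₂ + b₂) * (a₃ - b₃) = 0 := by linear_combination h₁ - h₄
    have k32 : (a₃ + b₃) * (a₂ - b₂) = 0 := by linear_combination h₁ + h₄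
    rw [mul_eq_zero] at k12 k21 k13 k31 k23 k32
    grind
  · rintro (⟨rfl, rfl, rfl, rfl⟩ | ⟨rfl, rfl, rfl, rfl⟩ | ⟨rfl, rfl, rfl, rfl⟩ |
      ⟨rfl, rfl, rfl⟩ | ⟨rfl, rfl, rfl⟩) <;> refine ⟨?_, ?_, ?_, ?_, ?_, ?_⟩ <;> ring

/-- Membership in `s₊` or `s₋` in rescaled coordinates. -/
lemma exists_eq_sPoint_iff {l1 l2 l3 l4 : ℝ}
    (hp12 : 0 < l1 + l2) (hp13 : 0 < l1 + l3) (hp14 : 0 < l1 + l4)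
    (hp23 : 0 < l2 + l3) (hp24 : 0 < l2 + l4) (hp34 : 0 < l3 + l4) (ε : ℝ) (p : Fin 6 → ℝ) :
    (∃ a₁ a₂ a₃ : ℝ, p = sPoint l1 l2 l3 l4 ε a₁ a₂ a₃) ↔
      (l2 + l3) * p 3 = ε * ((l1 + l4) * p 0) ∧ (l1 + l3) * p 4 = ε * ((l2 + l4) * p 1) ∧
        (l1 + l2) * p 5 = ε * ((l3 + l4) * p 2) := by
  constructor
  · rintro ⟨a₁, a₂, a₃, rfl⟩
    refine ⟨?_, ?_, ?_⟩ <;> simp [sPoint] <;> field_simp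
  · rintro ⟨h₁, h₂, h₃⟩
    refine ⟨(l1 + l4) * p 0, (l2 + l4) * p 1, (l3 + l4) * p 2, ?_⟩
    rw [sPoint, ← h₁, ← h₂, ← h₃]
    ext i
    fin_cases i <;> simp <;> field_simp

/-- for pairwise distinct `λᵢ` with `λᵢ+λⱼ > 0` (`i ≠ j`), the
zero set of the SO(4) free rigid body vector field is `t₁ ∪ t₂ ∪ t₃ ∪ s₊ ∪ s₋`. -/
theorem stmt5 (l1 l2 l3 l4 : ℝ)
    (hd12 : l1 ≠ l2) (hd13 : l1 ≠ l3) (hd14 : l1 ≠ l4)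
    (hd23 : l2 ≠ l3) (hd24 : l2 ≠ l4) (hd34 : l3 ≠ l4)
    (hp12 : 0 < l1 + l2) (hp13 : 0 < l1 + l3) (hp14 : 0 < l1 + l4)
    (hp23 : 0 < l2 + l3) (hp24 : 0 < l2 + l4) (hp34 : 0 < l3 + l4)
    (p : Fin 6 → ℝ) :
    rbF l1 l2 l3 l4 p = 0 ↔
      (p 1 = 0 ∧ p 2 = 0 ∧ p 4 = 0 ∧ p 5 = 0) ∨
      (p 0 = 0 ∧ p 2 = 0 ∧ p 3 = 0 ∧ p 5 = 0) ∨
      (p 0 = 0 ∧ p 1 = 0 ∧ p 3 = 0 ∧ p 4 = 0) ∨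
      (∃ a₁ a₂ a₃ : ℝ, p = sPoint l1 l2 l3 l4 1 a₁ a₂ a₃) ∨
      (∃ a₁ a₂ a₃ : ℝ, p = sPoint l1 l2 l3 l4 (-1) a₁ a₂ a₃) := by
  -- The component through `x₂x₃, y₂y₃` carries the factor `λ₃ - λ₂`, and so on: each of the six
  -- differences `λᵢ - λⱼ` is the common factor of exactly one component.
  have c₁ := component_eq_zero_iff (X := p 1 * p 2) (Y := p 4 * p 5) hp12 hp13 hp34 hp24
    (sub_ne_zero.2 hd23.symm) (by ring) (by ring)
  have c₂ := component_eq_zero_iff (X := p 0 * p 2) (Y := p 3 * p 5) hp23 hp12 hp14 hp34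
    (sub_ne_zero.2 hd13) (by ring) (by ring)
  have c₃ := component_eq_zero_iff (X := p 0 * p 1) (Y := p 3 * p 4) hp13 hp23 hp24 hp14
    (sub_ne_zero.2 hd12.symm) (by ring) (by ring)
  have c₄ := component_eq_zero_iff (X := p 1 * p 5) (Y := p 2 * p 4) hp34 hp13 hp12 hp24
    (sub_ne_zero.2 hd14) (by ring) (by ring)
  have c₅ := component_eq_zero_iff (X := p 0 * p 5) (Y := p 2 * p 3) hp23 hp34 hp14 hp12
    (sub_ne_zero.2 hd24.symm) (by ring) (by ring)
  have c₆ := component_eq_zero_iff (X := p 0 * p 4) (Y := p 1 * p 3) hp24 hp23 hp13 hp14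
    (sub_ne_zero.2 hd34) (by ring) (by ring)
  have hF : rbF l1 l2 l3 l4 p = 0 ↔
      (l3 + l4) * (l2 + l4) * (p 1 * p 2) = (l1 + l2) * (l1 + l3) * (p 4 * p 5) ∧
      (l1 + l4) * (l3 + l4) * (p 0 * p 2) = (l2 + l3) * (l1 + l2) * (p 3 * p 5) ∧
      (l2 + l4) * (l1 + l4) * (p 0 * p 1) = (l1 + l3) * (l2 + l3) * (p 3 * p 4) ∧
      (l1 + l2) * (l2 + l4) * (p 1 * p 5) = (l3 + l4) * (l1 + l3) * (p 2 * p 4) ∧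
      (l1 + l4) * (l1 + l2) * (p 0 * p 5) = (l2 + l3) * (l3 + l4) * (p 2 * p 3) ∧
      (l1 + l3) * (l1 + l4) * (p 0 * p 4) = (l2 + l4) * (l2 + l3) * (p 1 * p 3) := by
    rw [← c₁, ← c₂, ← c₃, ← c₄, ← c₅, ← c₆, funext_iff]
    simp [Fin.forall_fin_succ, rbF]
  have hs := scaled_system_iff ((l1 + l4) * p 0) ((l2 + l4) * p 1) ((l3 + l4) * p 2)
    ((l2 + l3) * p 3) ((l1 + l3) * p 4) ((l1 + l2) * p 5)
  simp only [mul_eq_zero, hp12.ne', hp13.ne', hp14.ne', hp23.ne', hp24.ne', hp34.ne',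
    false_or] at hs
  rw [hF, exists_eq_sPoint_iff hp12 hp13 hp14 hp23 hp24 hp34,
    exists_eq_sPoint_iff hp12 hp13 hp14 hp23 hp24 hp34]
  simp only [one_mul, neg_one_mul]
  rw [← hs]
  constructor
  · rintro ⟨h₁, h₂, h₃, h₄, h₅, h₆⟩
    refine ⟨?_, ?_, ?_, ?_, ?_, ?_⟩
    · linear_combination h₁
    · linear_combination h₂
    · linear_combination h₃
    · linear_combination h₄
    · linear_combination h₅
    · linear_combination h₆
  · rintro ⟨h₁, h₂, h₃, h₄, h₅, h₆⟩
    refine ⟨?_, ?_, ?_, ?_, ?_, ?_⟩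
    · linear_combination h₁
    · linear_combination h₂
    · linear_combination h₃
    · linear_combination h₄
    · linear_combination h₅
    · linear_combination h₆
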